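/- arXiv:2507.07316 — 2 statements merged into one kernel-verified Lean document; each statement's English description precedes it below -/
import Mathlib

section
/- Let Δ > 0, ε > 0, and b = Δ/ε. Let μ_{a,b} denote the Laplace measure on ℝ centered at a with scale b. For all a, a' ∈ ℝ with |a − a'| ≤ Δ and every Borel set A ⊆ ℝ, one has μ_{a,b}(A) ≤ e^ε · μ_{a',b}(A). -/
open MeasureTheory

/-- The Laplace density on ℝ with center `a` and scale `b`. -/
noncomputable def laplaceDensity (a b t : ℝ) : ℝ :=
  (1 / (2 * b)) * Real.exp (-|t - a| / b)

/-- The Laplace measure on ℝ with center `a` and scale `b`: the measure with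
density `laplaceDensity a b` with respect to Lebesgue measure. -/
noncomputable def laplaceMeasure (a b : ℝ) : Measure ℝ :=
  volume.withDensity (fun t => ENNReal.ofReal (laplaceDensity a b t))

lemma laplaceDensity_le_exp_mul {b : ℝ} (hb : 0 ≤ b) (a a' t : ℝ) :
    laplaceDensity a b t ≤ Real.exp (|a - a'| / b) * laplaceDensity a' b t := by
  have exponent_le : -|t - a| / b ≤ |a - a'| / b + -|t - a'| / b := by
    rw [← add_div]
    gcongr
    linarith [abs_sub_le t a a']
  calc 1 / (2 * b) * Real.exp (-|t - a| / b)
      ≤ 1 / (2 * b) * Real.exp (|a - a'| / b + -|t - a'| / b) := by gcongr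
    _ = Real.exp (|a - a'| / b) * (1 / (2 * b) * Real.exp (-|t - a'| / b)) := by
      rw [Real.exp_add, mul_left_comm]

lemma laplaceMeasure_le_smul {b : ℝ} (hb : 0 ≤ b) (a a' : ℝ) :
    laplaceMeasure a b ≤ ENNReal.ofReal (Real.exp (|a - a'| / b)) • laplaceMeasure a' b := by
  unfold laplaceMeasure
  rw [← withDensity_smul' _ _ ENNReal.ofReal_ne_top]
  refine withDensity_mono (ae_of_all _ fun t ↦ ?_)
  rw [Pi.smul_apply, smul_eq_mul, ← ENNReal.ofReal_mul (Real.exp_nonneg _)]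
  exact ENNReal.ofReal_le_ofReal (laplaceDensity_le_exp_mul hb a a' t)

/-- The Laplace mechanism with scale `b = Δ/ε` on a quantity of sensitivity `Δ`
satisfies `(ε, 0)`-differential privacy: for centers `a, a'` with `|a − a'| ≤ Δ`
and every Borel set `A`, `μ_{a,b}(A) ≤ e^ε · μ_{a',b}(A)`. -/
theorem laplace_mechanism_dp (Δ ε : ℝ) (hΔ : 0 < Δ) (hε : 0 < ε)
    (a a' : ℝ) (ha : |a - a'| ≤ Δ) (A : Set ℝ) (hA : MeasurableSet A) :
    laplaceMeasure a (Δ / ε) A ≤ ENNReal.ofReal (Real.exp ε) * laplaceMeasure a' (Δ / ε) A := by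
  have hb : 0 < Δ / ε := div_pos hΔ hε
  have privacy_loss_le : |a - a'| / (Δ / ε) ≤ ε := by
    rwa [div_le_iff₀ hb, mul_div_cancel₀ Δ hε.ne']
  calc laplaceMeasure a (Δ / ε) A
      ≤ ENNReal.ofReal (Real.exp (|a - a'| / (Δ / ε))) * laplaceMeasure a' (Δ / ε) A :=
        laplaceMeasure_le_smul hb.le a a' A
    _ ≤ ENNReal.ofReal (Real.exp ε) * laplaceMeasure a' (Δ / ε) A := by gcongr
end

section
/- Let T ≥ 1, ε > 0, and δ ∈ (0, 1). For each i ∈ {1,…,T} let μ_i and ν_i be probability measures on a measurable space X_i satisfying both μ_i(A) ≤ e^ε·ν_i(A) and ν_i(A) ≤ e^ε·μ_i(A) for every measurable A ⊆ X_i. Then setting ε_total = √(2·T·log(1/δ))·ε + T·ε·(e^ε − 1), the product measures satisfy (μ_1 ⊗ ⋯ ⊗ μ_T)(A) ≤ e^{ε_total} · (ν_1 ⊗ ⋯ ⊗ ν_T)(A) + δ for every measurable A ⊆ X_1 × ⋯ × X_T. -/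
open MeasureTheory

/-!
The privacy loss `llr μ ν` of one round takes values in `[-ε, ε]`, and that of the product measures
is the sum of the losses of the rounds, which are independent. Hoeffding's inequality therefore
bounds by `δ` the probability that the total loss exceeds its mean by more than
`√(2 · T · log (1/δ)) · ε`, and off that event the density of the product measures is bounded.
The mean of one loss is the Kullback-Leibler divergence `KL(μ, ν)`; since `KL(ν, μ) ≥ 0`, it is at
most `KL(μ, ν) + KL(ν, μ) = ∫ L · (1 - e⁻ᴸ) ∂μ` with `L = llr μ ν`, whose integrand is at most
`ε · (e^ε - 1)`.
-/

open ProbabilityTheory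
open scoped ENNReal NNReal

section RealInequalities

lemma abs_exp_sub_one_le_exp_abs_sub_one (x : ℝ) :
    |Real.exp x - 1| ≤ Real.exp |x| - 1 := by
  rcases le_total 0 x with hx | hx
  · rw [abs_of_nonneg hx, abs_of_nonneg (sub_nonneg.2 (Real.one_le_exp hx))]
  · rw [abs_of_nonpos hx, abs_of_nonpos (sub_nonpos.2 (Real.exp_le_one_iff.2 hx))]
    linarith [Real.add_one_le_exp x, Real.add_one_le_exp (-x)]

lemma mul_one_sub_exp_neg_le {x ε : ℝ} (hx : |x| ≤ ε) :
    x * (1 - Real.exp (-x)) ≤ ε * (Real.exp ε - 1) := by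
  have hε : 0 ≤ ε := (abs_nonneg x).trans hx
  calc x * (1 - Real.exp (-x)) ≤ |x| * |Real.exp (-x) - 1| := by
        rw [abs_sub_comm, ← abs_mul]
        exact le_abs_self _
    _ ≤ ε * (Real.exp ε - 1) := by
        have h := abs_exp_sub_one_le_exp_abs_sub_one (-x)
        rw [abs_neg] at h
        gcongr
        exact h.trans (by gcongr)

end RealInequalities

section LogLikelihoodRatio

variable {α : Type*} [MeasurableSpace α] {μ ν : Measure α}

lemma rnDeriv_le_of_le_smul [SigmaFinite ν] {c : ℝ≥0∞} (h : μ ≤ c • ν) :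
    ∀ᵐ x ∂ν, μ.rnDeriv ν x ≤ c := by
  refine ae_le_of_forall_setLIntegral_le_of_sigmaFinite (μ.measurable_rnDeriv ν) fun s _ _ ↦ ?_
  calc ∫⁻ x in s, μ.rnDeriv ν x ∂ν ≤ μ s := Measure.setLIntegral_rnDeriv_le s
    _ ≤ c * ν s := h s
    _ = ∫⁻ _ in s, c ∂ν := (setLIntegral_const s c).symm

lemma llr_le_of_le_smul [SigmaFinite μ] [SigmaFinite ν] {ε : ℝ}
    (h : μ ≤ ENNReal.ofReal (Real.exp ε) • ν) : ∀ᵐ x ∂μ, llr μ ν x ≤ ε := by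
  have hμν : μ ≪ ν := Measure.absolutelyContinuous_of_le_smul h
  filter_upwards [exp_llr_of_ac μ ν hμν, hμν.ae_le (rnDeriv_le_of_le_smul h)] with x hexp hle
  rw [← Real.exp_le_exp, hexp]
  exact ENNReal.toReal_le_of_le_ofReal (Real.exp_nonneg ε) hle

lemma abs_llr_le_of_le_smul [SigmaFinite μ] [SigmaFinite ν] {ε : ℝ}
    (hμν : μ ≤ ENNReal.ofReal (Real.exp ε) • ν) (hνμ : ν ≤ ENNReal.ofReal (Real.exp ε) • μ) :
    ∀ᵐ x ∂μ, |llr μ ν x| ≤ ε := by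
  have hac : μ ≪ ν := Measure.absolutelyContinuous_of_le_smul hμν
  filter_upwards [llr_le_of_le_smul hμν, hac.ae_le (llr_le_of_le_smul hνμ), neg_llr hac]
    with x hle hge hneg
  rw [← hneg, Pi.neg_apply] at hge
  exact abs_le'.2 ⟨hle, hge⟩

lemma rnDeriv_le_ofReal_exp_llr [SigmaFinite μ] :
    ∀ᵐ x ∂ν, μ.rnDeriv ν x ≤ ENNReal.ofReal (Real.exp (llr μ ν x)) := by
  filter_upwards [μ.rnDeriv_ne_top ν] with x hx
  exact (ENNReal.le_ofReal_iff_toReal_le hx (Real.exp_nonneg _)).2 (Real.le_exp_log _)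

lemma integral_llr_swap [SigmaFinite μ] [SigmaFinite ν] (hμν : μ ≪ ν) (hνμ : ν ≪ μ) :
    ∫ x, llr ν μ x ∂ν = -∫ x, Real.exp (-llr μ ν x) * llr μ ν x ∂μ := by
  rw [← integral_rnDeriv_mul_log hνμ, ← integral_neg]
  refine integral_congr_ae ?_
  filter_upwards [exp_neg_llr hμν, neg_llr hμν] with x hexp hneg
  rw [hexp, ← mul_neg, ← Pi.neg_apply, hneg, llr]

lemma integral_llr_le_of_le_smul [IsProbabilityMeasure μ] [IsProbabilityMeasure ν] {ε : ℝ}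
    (hμν : μ ≤ ENNReal.ofReal (Real.exp ε) • ν) (hνμ : ν ≤ ENNReal.ofReal (Real.exp ε) • μ) :
    ∫ x, llr μ ν x ∂μ ≤ ε * (Real.exp ε - 1) := by
  have hac : μ ≪ ν := Measure.absolutelyContinuous_of_le_smul hμν
  have hac' : ν ≪ μ := Measure.absolutelyContinuous_of_le_smul hνμ
  have hbound := abs_llr_le_of_le_smul hμν hνμ
  have hint : Integrable (llr μ ν) μ := .of_bound (by fun_prop) ε hbound
  have hint_swap : Integrable (llr ν μ) ν :=
    .of_bound (by fun_prop) ε (abs_llr_le_of_le_smul hνμ hμν)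
  have hint_exp : Integrable (fun x ↦ Real.exp (-llr μ ν x) * llr μ ν x) μ := by
    refine hint.bdd_mul (c := Real.exp ε) (by fun_prop) ?_
    filter_upwards [hbound] with x hx
    rw [Real.norm_of_nonneg (Real.exp_nonneg _), Real.exp_le_exp]
    exact neg_le.1 (abs_le.1 hx).1
  have gibbs : 0 ≤ ∫ x, llr ν μ x ∂ν := by
    simpa using InformationTheory.integral_llr_add_sub_measure_univ_nonneg hac' hint_swap
  calc ∫ x, llr μ ν x ∂μ ≤ ∫ x, llr μ ν x ∂μ + ∫ x, llr ν μ x ∂ν := le_add_of_nonneg_right gibbs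
    _ = ∫ x, llr μ ν x * (1 - Real.exp (-llr μ ν x)) ∂μ := by
        rw [integral_llr_swap hac hac', ← sub_eq_add_neg, ← integral_sub hint hint_exp]
        exact integral_congr_ae (.of_forall fun x ↦ by ring)
    _ ≤ ∫ _, ε * (Real.exp ε - 1) ∂μ := by
        refine integral_mono_ae ?_ (integrable_const _) (hbound.mono fun _ ↦ mul_one_sub_exp_neg_le)
        exact (hint.sub hint_exp).congr (.of_forall fun x ↦ by simp only [Pi.sub_apply]; ring)
    _ = ε * (Real.exp ε - 1) := by simp

end LogLikelihoodRatio

section Pi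

lemma lintegral_fin_prod_eq_prod {n : ℕ} {X : Fin n → Type*} [∀ i, MeasurableSpace (X i)]
    (μ : ∀ i, Measure (X i)) [∀ i, SigmaFinite (μ i)] {f : ∀ i, X i → ℝ≥0∞}
    (hf : ∀ i, Measurable (f i)) :
    ∫⁻ x, ∏ i, f i (x i) ∂Measure.pi μ = ∏ i, ∫⁻ x, f i x ∂μ i := by
  induction n with
  | zero => simp
  | succ n ih =>
    have hrest : Measurable fun y : ∀ j, X (Fin.succAbove 0 j) ↦
        ∏ j, f (Fin.succAbove 0 j) (y j) := by fun_prop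
    simp_rw [Fin.prod_univ_succAbove _ (0 : Fin (n + 1))]
    rw [← ih _ fun j ↦ hf (Fin.succAbove 0 j),
      ← lintegral_prod_mul (hf 0).aemeasurable hrest.aemeasurable]
    exact (measurePreserving_piFinSuccAbove μ 0).lintegral_comp
      (((hf 0).comp measurable_fst).mul (hrest.comp measurable_snd))

variable {ι : Type*} [Fintype ι] {X : ι → Type*} [∀ i, MeasurableSpace (X i)]

lemma lintegral_fintype_prod_eq_prod (μ : ∀ i, Measure (X i)) [∀ i, SigmaFinite (μ i)]
    {f : ∀ i, X i → ℝ≥0∞} (hf : ∀ i, Measurable (f i)) :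
    ∫⁻ x, ∏ i, f i (x i) ∂Measure.pi μ = ∏ i, ∫⁻ x, f i x ∂μ i := by
  let e := (Fintype.equivFin ι).symm
  rw [← (measurePreserving_piCongrLeft _ e).lintegral_comp_emb
    (MeasurableEquiv.measurableEmbedding _)]
  simp_rw [← e.prod_comp, MeasurableEquiv.coe_piCongrLeft, Equiv.piCongrLeft_apply_apply]
  exact lintegral_fin_prod_eq_prod _ fun i ↦ hf (e i)

lemma pi_withDensity (μ : ∀ i, Measure (X i)) [∀ i, SigmaFinite (μ i)] {f : ∀ i, X i → ℝ≥0∞}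
    (hf : ∀ i, Measurable (f i)) [∀ i, SigmaFinite ((μ i).withDensity (f i))] :
    Measure.pi (fun i ↦ (μ i).withDensity (f i)) =
      (Measure.pi μ).withDensity fun x ↦ ∏ i, f i (x i) := by
  refine Measure.pi_eq fun s hs ↦ ?_
  simp_rw [withDensity_apply _ (MeasurableSet.univ_pi hs), Measure.restrict_pi_pi,
    lintegral_fintype_prod_eq_prod _ hf, withDensity_apply _ (hs _)]

variable {μ ν : ∀ i, Measure (X i)} [∀ i, SigmaFinite (μ i)] [∀ i, SigmaFinite (ν i)]

lemma pi_eq_withDensity_prod_rnDeriv (h : ∀ i, μ i ≪ ν i) :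
    Measure.pi μ = (Measure.pi ν).withDensity fun x ↦ ∏ i, (μ i).rnDeriv (ν i) (x i) := by
  rw [← pi_withDensity ν fun i ↦ (μ i).measurable_rnDeriv (ν i)]
  simp_rw [Measure.withDensity_rnDeriv_eq _ _ (h _)]

lemma absolutelyContinuous_pi (h : ∀ i, μ i ≪ ν i) : Measure.pi μ ≪ Measure.pi ν := by
  rw [pi_eq_withDensity_prod_rnDeriv h]
  exact withDensity_absolutelyContinuous _ _

lemma rnDeriv_pi (h : ∀ i, μ i ≪ ν i) :
    (Measure.pi μ).rnDeriv (Measure.pi ν) =ᵐ[Measure.pi ν]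
      fun x ↦ ∏ i, (μ i).rnDeriv (ν i) (x i) := by
  rw [pi_eq_withDensity_prod_rnDeriv h]
  exact Measure.rnDeriv_withDensity _ (by fun_prop)

lemma llr_pi (h : ∀ i, μ i ≪ ν i) :
    llr (Measure.pi μ) (Measure.pi ν) =ᵐ[Measure.pi μ] fun x ↦ ∑ i, llr (μ i) (ν i) (x i) := by
  have hne : ∀ᵐ x ∂Measure.pi μ, ∀ i, ((μ i).rnDeriv (ν i) (x i)).toReal ≠ 0 := by
    refine Filter.eventually_all.2 fun i ↦ (Measure.quasiMeasurePreserving_eval μ i).ae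
      (p := fun y ↦ ((μ i).rnDeriv (ν i) y).toReal ≠ 0) ?_
    filter_upwards [Measure.rnDeriv_pos (h i), (h i).ae_le ((μ i).rnDeriv_ne_top (ν i))]
      with x hpos htop
    exact ENNReal.toReal_ne_zero.2 ⟨hpos.ne', htop⟩
  filter_upwards [(absolutelyContinuous_pi h).ae_le (rnDeriv_pi h), hne] with x hprod hx
  rw [llr, hprod, ENNReal.toReal_prod, Real.log_prod fun i _ ↦ hx i]
  rfl

end Pi

section Concentration

lemma measure_sqrt_two_mul_log_lt_le {Ω : Type*} [MeasurableSpace Ω] {P : Measure Ω}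
    [IsFiniteMeasure P] {Y : Ω → ℝ} {c : ℝ≥0} {δ : ℝ} (hY : HasSubgaussianMGF Y c P)
    (hδ0 : 0 < δ) (hδ1 : δ ≤ 1) :
    P {ω | √(2 * c * Real.log (1 / δ)) < Y ω} ≤ ENNReal.ofReal δ := by
  rcases eq_zero_or_pos c with rfl | hc
  · have hnull : P {ω | 0 < Y ω} = 0 := by
      refine measure_eq_zero_iff_ae_notMem.2 ?_
      filter_upwards [hY.ae_eq_zero_of_hasSubgaussianMGF_zero] with ω hω
      simp [hω]
    simp [hnull]
  · have hlog : 0 ≤ Real.log (1 / δ) := Real.log_nonneg (one_le_one_div hδ0 hδ1)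
    have hexp : -√(2 * c * Real.log (1 / δ)) ^ 2 / (2 * c) = Real.log δ := by
      rw [Real.sq_sqrt (by positivity), one_div, Real.log_inv]
      field_simp
    calc P {ω | √(2 * c * Real.log (1 / δ)) < Y ω}
        ≤ P {ω | √(2 * c * Real.log (1 / δ)) ≤ Y ω} :=
          measure_mono (Set.ofPred_subset_ofPred.2 fun _ ↦ le_of_lt)
      _ ≤ ENNReal.ofReal δ := by
          rw [← ofReal_measureReal]
          refine ENNReal.ofReal_le_ofReal ((hY.measure_ge_le (Real.sqrt_nonneg _)).trans_eq ?_)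
          rw [hexp, Real.exp_log hδ0]

lemma hasSubgaussianMGF_pi_sum_sub_integral {ι : Type*} [Fintype ι] {X : ι → Type*}
    [∀ i, MeasurableSpace (X i)] {μ : ∀ i, Measure (X i)} [∀ i, IsProbabilityMeasure (μ i)]
    {f : ∀ i, X i → ℝ} {a b : ι → ℝ} (hf : ∀ i, AEMeasurable (f i) (μ i))
    (hab : ∀ i, ∀ᵐ x ∂μ i, f i x ∈ Set.Icc (a i) (b i)) :
    HasSubgaussianMGF (fun x ↦ ∑ i, (f i (x i) - ∫ y, f i y ∂μ i))
      (∑ i, (‖b i - a i‖₊ / 2) ^ 2) (Measure.pi μ) := by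
  refine HasSubgaussianMGF.sum_of_iIndepFun
    (iIndepFun_pi fun i ↦ (hf i).sub_const (∫ y, f i y ∂μ i)) fun i _ ↦ ?_
  refine HasSubgaussianMGF.of_map (X := fun y ↦ f i y - ∫ y, f i y ∂μ i)
    (measurable_pi_apply i).aemeasurable ?_
  rw [(measurePreserving_eval μ i).map_eq]
  exact hasSubgaussianMGF_of_mem_Icc (hf i) (hab i)

end Concentration

/-- One-sided `(ε, δ)`-indistinguishability of measures, the guarantee of `(ε, δ)`-differential
privacy for the output laws on two neighbouring inputs. The symmetric notion of differential privacy
is obtained by imposing it in both directions. -/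
def Indistinguishable {α : Type*} [MeasurableSpace α] (ε δ : ℝ) (μ ν : Measure α) : Prop :=
  ∀ A, MeasurableSet A → μ A ≤ ENNReal.ofReal (Real.exp ε) * ν A + ENNReal.ofReal δ

namespace Indistinguishable

variable {α : Type*} [MeasurableSpace α] {μ ν : Measure α} {ε δ : ℝ}

lemma zero_iff : Indistinguishable ε 0 μ ν ↔ μ ≤ ENNReal.ofReal (Real.exp ε) • ν := by
  simp [Indistinguishable, Measure.le_iff]

lemma of_measure_lt_llr_le [SigmaFinite μ] [SigmaFinite ν] (hμν : μ ≪ ν)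
    (h : μ {x | ε < llr μ ν x} ≤ ENNReal.ofReal δ) : Indistinguishable ε δ μ ν := by
  intro A hA
  have hlow : MeasurableSet {x | llr μ ν x ≤ ε} :=
    measurableSet_le (measurable_llr μ ν) measurable_const
  have hdensity : μ (A ∩ {x | llr μ ν x ≤ ε}) ≤ ENNReal.ofReal (Real.exp ε) * ν A := by
    calc μ (A ∩ {x | llr μ ν x ≤ ε})
        = ∫⁻ x in A ∩ {x | llr μ ν x ≤ ε}, μ.rnDeriv ν x ∂ν :=
          (Measure.setLIntegral_rnDeriv hμν _).symm
      _ ≤ ∫⁻ _ in A ∩ {x | llr μ ν x ≤ ε}, ENNReal.ofReal (Real.exp ε) ∂ν := by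
          refine setLIntegral_mono_ae' (hA.inter hlow) ?_
          filter_upwards [rnDeriv_le_ofReal_exp_llr (μ := μ)] with x hx hxA
          exact hx.trans (ENNReal.ofReal_le_ofReal (Real.exp_le_exp.2 hxA.2))
      _ ≤ ENNReal.ofReal (Real.exp ε) * ν A := by
          rw [setLIntegral_const]
          gcongr
          exact Set.inter_subset_left
  calc μ A ≤ μ (A ∩ {x | llr μ ν x ≤ ε}) + μ (A \ {x | llr μ ν x ≤ ε}) :=
        measure_le_inter_add_sdiff μ A _
    _ ≤ ENNReal.ofReal (Real.exp ε) * ν A + ENNReal.ofReal δ := by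
        gcongr
        exact (measure_mono fun x hx ↦ by simpa using hx.2).trans h

end Indistinguishable

theorem dp_advanced_composition_general {ι : Type*} [Fintype ι] {X : ι → Type*}
    [∀ i, MeasurableSpace (X i)] {μ ν : ∀ i, Measure (X i)}
    [∀ i, IsProbabilityMeasure (μ i)] [∀ i, IsProbabilityMeasure (ν i)]
    {ε : ι → ℝ} {δ : ℝ} (hδ0 : 0 < δ) (hδ1 : δ ≤ 1)
    (hμν : ∀ i, Indistinguishable (ε i) 0 (μ i) (ν i))
    (hνμ : ∀ i, Indistinguishable (ε i) 0 (ν i) (μ i)) :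
    Indistinguishable
      (√(2 * (∑ i, ε i ^ 2) * Real.log (1 / δ)) + ∑ i, ε i * (Real.exp (ε i) - 1)) δ
      (Measure.pi μ) (Measure.pi ν) := by
  simp_rw [Indistinguishable.zero_iff] at hμν hνμ
  have hac i : μ i ≪ ν i := Measure.absolutelyContinuous_of_le_smul (hμν i)
  have hmean : ∑ i, ∫ x, llr (μ i) (ν i) x ∂μ i ≤ ∑ i, ε i * (Real.exp (ε i) - 1) :=
    Finset.sum_le_sum fun i _ ↦ integral_llr_le_of_le_smul (hμν i) (hνμ i)
  have htail := measure_sqrt_two_mul_log_lt_le (hasSubgaussianMGF_pi_sum_sub_integral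
    (fun i ↦ (measurable_llr (μ i) (ν i)).aemeasurable)
    fun i ↦ (abs_llr_le_of_le_smul (hμν i) (hνμ i)).mono fun _ ↦ abs_le.1) hδ0 hδ1
  have hvar : ((∑ i, (‖ε i - -ε i‖₊ / 2) ^ 2 : ℝ≥0) : ℝ) = ∑ i, ε i ^ 2 := by
    simp [← two_mul]
  rw [hvar] at htail
  refine .of_measure_lt_llr_le (absolutelyContinuous_pi hac) (le_trans ?_ htail)
  refine measure_mono_ae ?_
  filter_upwards [llr_pi hac] with x hx hlt
  change _ < _ at hlt ⊢
  rw [Finset.sum_sub_distrib]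
  linarith

/-- Advanced composition (independent, non-adaptive form), as in Theorem 1 of
the paper: if each round's pair of probability measures is mutually
`(ε, 0)`-indistinguishable, then over `T` rounds the product measures are
`(ε_total, δ)`-indistinguishable with
`ε_total = √(2·T·log(1/δ))·ε + T·ε·(e^ε − 1)`. -/
theorem dp_advanced_composition (T : ℕ) (hT : 1 ≤ T) (ε δ : ℝ)
    (hε : 0 < ε) (hδ0 : 0 < δ) (hδ1 : δ < 1)
    (X : Fin T → Type*) [∀ i, MeasurableSpace (X i)]
    (μ ν : ∀ i, Measure (X i))
    [∀ i, IsProbabilityMeasure (μ i)] [∀ i, IsProbabilityMeasure (ν i)]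
    (hμν : ∀ i, ∀ A : Set (X i), MeasurableSet A →
      μ i A ≤ ENNReal.ofReal (Real.exp ε) * ν i A)
    (hνμ : ∀ i, ∀ A : Set (X i), MeasurableSet A →
      ν i A ≤ ENNReal.ofReal (Real.exp ε) * μ i A) :
    ∀ A : Set (∀ i, X i), MeasurableSet A →
      Measure.pi μ A ≤
        ENNReal.ofReal
            (Real.exp (Real.sqrt (2 * T * Real.log (1 / δ)) * ε + T * ε * (Real.exp ε - 1))) *
          Measure.pi ν A + ENNReal.ofReal δ := by
  have h := dp_advanced_composition_general (ε := fun _ ↦ ε) hδ0 hδ1.le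
    (by simpa [Indistinguishable] using hμν) (by simpa [Indistinguishable] using hνμ)
  simpa [-one_div, Indistinguishable, ← mul_assoc, mul_right_comm _ (ε ^ 2),
    Real.sqrt_mul' _ (sq_nonneg ε), Real.sqrt_sq hε.le] using h
end
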